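/- Let r = (l; 1, p̄⁻¹(1+β)) and r' = (l'; 1, p̄⁻¹(1+β')) be roots of L = Λ⊕H with β, β' purely imaginary quaternions. If ⟨l−l', l−l'⟩ = −4 and β − β' = Im⟨l,l'⟩, then the i-reflections φ_r^i and φ_{r'}^i commute. If ⟨l−l', l−l'⟩ = −6 and β − β' = Im⟨l,l'⟩ + i or β − β' = Im⟨l,l'⟩ − i, then φ_r^i and φ_{r'}^i braid, i.e. φ_r^i φ_{r'}^i φ_r^i = φ_{r'}^i φ_r^i φ_{r'}^i. -/

import Mathlib

/- Formalization over the ring ℋ of Hurwitz integers inside the real quaternions. -/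

noncomputable section
open Quaternion Finset

/-- The real quaternions ℍ. -/
abbrev Quat := Quaternion ℝ

/-- The quaternion `i`. -/
def qi : Quat := ⟨0, 1, 0, 0⟩
/-- The quaternion `j`. -/
def qj : Quat := ⟨0, 0, 1, 0⟩
/-- The quaternion `k`. -/
def qk : Quat := ⟨0, 0, 0, 1⟩
/-- `p = 1 - i`. -/
def qp : Quat := 1 - qi

/-- A quaternion is a Hurwitz integer if it is `(a+bi+cj+dk)/2` with
`a,b,c,d` integers which are all congruent mod `2`. -/
def IsHurwitz (q : Quat) : Prop :=
  ∃ a b c d : ℤ, a % 2 = b % 2 ∧ b % 2 = c % 2 ∧ c % 2 = d % 2 ∧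
    q = ⟨(a : ℝ) / 2, (b : ℝ) / 2, (c : ℝ) / 2, (d : ℝ) / 2⟩

/-- A unit of the ring ℋ of Hurwitz integers. -/
def IsUnitH (q : Quat) : Prop :=
  IsHurwitz q ∧ ∃ r : Quat, IsHurwitz r ∧ q * r = 1 ∧ r * q = 1

/-- Membership in the (two-sided) ideal `pℋ`. -/
def InPH (q : Quat) : Prop := ∃ h : Quat, IsHurwitz h ∧ q = qp * h

/-- `ω = (−1+i+j+k)/2`. -/
def omg : Quat := ⟨-1/2, 1/2, 1/2, 1/2⟩

/-- Membership in the ideal `2ℋ`. -/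
def In2H (q : Quat) : Prop := ∃ h : Quat, IsHurwitz h ∧ q = 2 * h
/-- Membership in the ideal `(2+2i)ℋ`. -/
def In2p2iH (q : Quat) : Prop := ∃ h : Quat, IsHurwitz h ∧ q = (2 + 2 * qi) * h

/-- The quaternionic Leech lattice `Λ` (coordinates `(v∞,v₀,v₁,v₂,v₃,v₄)`). -/
def memLeech (v : Fin 6 → Quat) : Prop :=
  (∀ s, IsHurwitz (v s)) ∧
  InPH (v 3 - v 4) ∧ InPH (v 4 - v 5) ∧
  In2H ((v 2 + v 5) * star omg + (v 3 + v 4) * omg) ∧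
  In2H ((v 1 + v 2) * omg + (v 3 + v 5) * star omg) ∧
  In2p2iH (-(v 0) * (qi + qj + qk) + v 1 + v 2 + v 3 + v 4 + v 5)

/-- The ambient space of `L = Λ ⊕ H`: vectors `(λ; μ, ν)`. -/
abbrev VL : Type := (Fin 6 → Quat) × Quat × Quat

/-- The form on (the ambient space of) the Leech lattice: `⟨x,y⟩ = −(1/2) Σ x̄ₛ yₛ`. -/
def ipLeech (x y : Fin 6 → Quat) : Quat := -(2 : Quat)⁻¹ * ∑ s : Fin 6, star (x s) * y s

/-- The ℋ-valued form on `L = Λ ⊕ H`. -/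
def ipLL (x y : VL) : Quat :=
  ipLeech x.1 y.1 + star x.2.1 * star qp * y.2.2 + star x.2.2 * qp * y.2.1

/-- Membership in the lattice `L = Λ ⊕ H`. -/
def memLL (v : VL) : Prop := memLeech v.1 ∧ IsHurwitz v.2.1 ∧ IsHurwitz v.2.2

/-- Right scalar multiplication on the ambient space of `Λ ⊕ H`. -/
def rmulL (v : VL) (q : Quat) : VL := (fun s => v.1 s * q, v.2.1 * q, v.2.2 * q)

/-- The `μ`-reflection in a root `r` : `v ↦ v − r(1−μ)⟨r,v⟩/|r|²`. -/
def reflL (r : VL) (μ : Quat) (v : VL) : VL := v - rmulL r ((1 - μ) * ipLL r v / ipLL r r)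

/-- Right scalar multiplication on (the ambient space of) the Leech lattice. -/
def rmulLam (lam : Fin 6 → Quat) (q : Quat) : Fin 6 → Quat := fun s => lam s * q

/-- The translation `T_{λ,z}` :
`(m; μ, ν) ↦ (m + λμ; μ, ν − p̄⁻¹⟨λ,m⟩ + p̄⁻¹(z − ⟨λ,λ⟩/2)μ)`. -/
def Tlz (lam : Fin 6 → Quat) (z : Quat) (v : VL) : VL :=
  (v.1 + rmulLam lam v.2.1, v.2.1,
   v.2.2 - (star qp)⁻¹ * ipLeech lam v.1 + (star qp)⁻¹ * (z - ipLeech lam lam / 2) * v.2.1)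

/-- The imaginary part `Im q = (q − q̄)/2` of a quaternion. -/
def Imq (q : Quat) : Quat := (q - star q) / 2

theorem qi_re : qi.re = 0 := rfl
theorem qi_imI : qi.imI = 1 := rfl
theorem qi_imJ : qi.imJ = 0 := rfl
theorem qi_imK : qi.imK = 0 := rfl

/-- The scalar `(1-i)/2`. -/
def qc : Quat := ⟨1 / 2, -1 / 2, 0, 0⟩

theorem qc_re : qc.re = 1 / 2 := rfl
theorem qc_imI : qc.imI = -1 / 2 := rfl
theorem qc_imJ : qc.imJ = 0 := rfl
theorem qc_imK : qc.imK = 0 := rfl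

theorem aux_two : (2 : Quat) = ((2 : ℝ) : Quat) := by
  rw [← one_add_one_eq_two, ← one_add_one_eq_two, Quaternion.coe_add, Quaternion.coe_one]

theorem quat_two_ne : (2 : Quat) ≠ 0 := by
  rw [aux_two]
  intro h
  have := congrArg QuaternionAlgebra.re h
  rw [Quaternion.re_coe, Quaternion.re_zero] at this
  norm_num at this

theorem ipLeech_star (x y : Fin 6 → Quat) : ipLeech y x = star (ipLeech x y) := by
  unfold ipLeech
  rw [aux_two, ← Quaternion.coe_inv, ← Quaternion.coe_neg, star_mul, star_sum, Quaternion.star_coe,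
    ← Quaternion.coe_commutes]
  simp

theorem ipLeech_add (x y z : Fin 6 → Quat) :
    ipLeech x (y + z) = ipLeech x y + ipLeech x z := by
  simp [ipLeech, mul_add, Finset.sum_add_distrib]

theorem ipLeech_sub_sub (x y : Fin 6 → Quat) :
    ipLeech (x - y) (x - y) = ipLeech x x - ipLeech x y - ipLeech y x + ipLeech y y := by
  unfold ipLeech
  rw [← mul_sub, ← mul_sub, ← mul_add, ← Finset.sum_sub_distrib, ← Finset.sum_sub_distrib,
    ← Finset.sum_add_distrib]
  congr 1
  refine Finset.sum_congr rfl fun s _ => ?_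
  simp only [Pi.sub_apply, star_sub]
  noncomm_ring

theorem ipLL_add (x y z : VL) : ipLL x (y + z) = ipLL x y + ipLL x z := by
  simp only [ipLL, Prod.fst_add, Prod.snd_add, ipLeech_add]
  noncomm_ring

theorem ipLL_rmul (x y : VL) (q : Quat) : ipLL x (rmulL y q) = ipLL x y * q := by
  simp only [ipLL, rmulL, ipLeech, add_mul, mul_assoc, Finset.sum_mul]

theorem ipLL_star (x y : VL) : ipLL y x = star (ipLL x y) := by
  simp only [ipLL, star_add, star_mul, star_star, ← ipLeech_star, mul_assoc]
  abel

theorem rmulL_add (x : VL) (a b : Quat) : rmulL x (a + b) = rmulL x a + rmulL x b := by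
  refine Prod.ext (funext fun s => ?_) (Prod.ext ?_ ?_) <;> simp [rmulL, mul_add]

theorem reflL_eq (r v : VL) (h : ipLL r r = -2) :
    reflL r qi v = v + rmulL r (qc * ipLL r v) := by
  have hc : (1 - qi) * ipLL r v / ipLL r r = - (qc * ipLL r v) := by
    have h2 : (-2 : Quat) ≠ 0 := neg_ne_zero.mpr quat_two_ne
    have h1 : 1 - qi = qc * 2 := by
      rw [aux_two]; ext <;> norm_num [qi_re, qi_imI, qi_imJ, qi_imK, qc_re, qc_imI, qc_imJ, qc_imK]
    have h3 : (2 : Quat) * ipLL r v = ipLL r v * 2 := by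
      rw [two_mul, mul_two]
    rw [h, div_eq_iff h2, h1, mul_assoc, h3, neg_mul_neg, mul_assoc]
  rw [reflL, hc]
  refine Prod.ext (funext fun s => ?_) (Prod.ext ?_ ?_) <;> simp [rmulL]

theorem ip_roots (l l' : Fin 6 → Quat) (β β' : Quat) (hβ : β.re = 0) :
    ipLL (l, 1, (star qp)⁻¹ * (1 + β)) (l', 1, (star qp)⁻¹ * (1 + β'))
      = ipLeech l l' + 2 + (β' - β) := by
  have hp : qp ≠ 0 := by
    intro h; have := congrArg QuaternionAlgebra.re h; norm_num [qp, qi_re] at this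
  have hs : star qp ≠ 0 := star_ne_zero.mpr hp
  have hb : star β = -β := by ext <;> simp [hβ]
  simp only [ipLL, star_mul, star_add, star_one, star_inv₀, star_star, hb, one_mul, mul_one,
    mul_assoc, inv_mul_cancel₀ hp, mul_inv_cancel_left₀ hs]
  rw [← one_add_one_eq_two]
  abel

theorem ip_self (l : Fin 6 → Quat) (β : Quat) (hβ : β.re = 0)
    (h : ipLL (l, 1, (star qp)⁻¹ * (1 + β)) (l, 1, (star qp)⁻¹ * (1 + β)) = -2) :
    ipLeech l l = -4 := by
  rw [ip_roots l l β β hβ, sub_self, add_zero] at h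
  rw [eq_sub_of_add_eq h]; norm_num

theorem Imq_eq (A t : Quat) (h : A + star A = 2 * t) : Imq A = A - t := by
  have h2 : (2 : Quat) ≠ 0 := quat_two_ne
  rw [Imq, div_eq_iff h2, eq_sub_of_add_eq' h]
  rw [sub_mul, mul_two, mul_two, two_mul]
  abel

theorem braid_aux (r r' : VL) (a b : Quat) (h : ipLL r r = -2) (h' : ipLL r' r' = -2)
    (ha : ipLL r r' = a) (hb : ipLL r' r = b)
    (e1 : qc * -2 * qc + qc * a * qc * b * qc = - qc)
    (e2 : qc * -2 * qc + qc * b * qc * a * qc = - qc) (v : VL) :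
    reflL r qi (reflL r' qi (reflL r qi v)) = reflL r' qi (reflL r qi (reflL r' qi v)) := by
  simp only [reflL_eq _ _ h, reflL_eq _ _ h', ipLL_add, ipLL_rmul, h, h', ha, hb]
  generalize ipLL r v = x
  generalize ipLL r' v = y
  have k1 : qc * (x + -2 * (qc * x) + a * (qc * (y + b * (qc * x))))
      = qc * a * qc * y := by
    have : qc * (x + -2 * (qc * x) + a * (qc * (y + b * (qc * x)))) =
      (qc * -2 * qc + qc * a * qc * b * qc) * x + qc * x + qc * a * qc * y := by
        noncomm_ring
    rw [this, e1]; noncomm_ring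
  have k2 : qc * (y + -2 * (qc * y) + b * (qc * (x + a * (qc * y))))
      = qc * b * qc * x := by
    have : qc * (y + -2 * (qc * y) + b * (qc * (x + a * (qc * y)))) =
      (qc * -2 * qc + qc * b * qc * a * qc) * y + qc * y + qc * b * qc * x := by
        noncomm_ring
    rw [this, e2]; noncomm_ring
  rw [k1, k2]
  simp only [mul_add, rmulL_add, mul_assoc]
  abel

/-- Let `r = (l; 1, p̄⁻¹(1+β))` and `r' = (l'; 1, p̄⁻¹(1+β'))` be roots
of `L = Λ ⊕ H` with `β, β'` purely imaginary.  If `⟨l−l',l−l'⟩ = −4` and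
`β − β' = Im⟨l,l'⟩` then `φ_r^i` and `φ_{r'}^i` commute; if `⟨l−l',l−l'⟩ = −6` and
`β − β' = Im⟨l,l'⟩ ± i` then `φ_r^i` and `φ_{r'}^i` braid. -/
theorem commuting_and_braiding_conditions (l l' : Fin 6 → Quat) (β β' : Quat)
    (hβ : β.re = 0) (hβ' : β'.re = 0) (r r' : VL)
    (hrdef : r = (l, 1, (star qp)⁻¹ * (1 + β)))
    (hr'def : r' = (l', 1, (star qp)⁻¹ * (1 + β')))
    (hr : memLL r ∧ ipLL r r = -2) (hr' : memLL r' ∧ ipLL r' r' = -2) :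
    ((ipLeech (l - l') (l - l') = -4 ∧ β - β' = Imq (ipLeech l l')) →
      ∀ v, reflL r qi (reflL r' qi v) = reflL r' qi (reflL r qi v)) ∧
    ((ipLeech (l - l') (l - l') = -6 ∧
        (β - β' = Imq (ipLeech l l') + qi ∨ β - β' = Imq (ipLeech l l') - qi)) →
      ∀ v, reflL r qi (reflL r' qi (reflL r qi v))
          = reflL r' qi (reflL r qi (reflL r' qi v))) := by
  subst hrdef hr'def
  obtain ⟨-, hr⟩ := hr
  obtain ⟨-, hr'⟩ := hr'
  have hl := ip_self l β hβ hr
  have hl' := ip_self l' β' hβ' hr'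
  have hrr := ip_roots l l' β β' hβ
  have hrr' := ipLL_star (l, 1, (star qp)⁻¹ * (1 + β)) (l', 1, (star qp)⁻¹ * (1 + β'))
  have hs := ipLeech_sub_sub l l'
  rw [hl, hl', ipLeech_star l l'] at hs
  rw [← neg_sub β β'] at hrr
  generalize ipLeech l l' = A at *
  refine ⟨?_, ?_⟩
  · rintro ⟨h4, hb⟩ v
    rw [h4] at hs
    have hA : A + star A = 2 * (-2) := by
      have : A + star A = -4 + -4 - (-4 - A - star A + -4) := by abel
      rw [this, ← hs]; norm_num
    rw [hb, Imq_eq A _ hA] at hrr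
    have h0 : A + 2 + -(A - -2) = 0 := by rw [sub_neg_eq_add]; abel
    rw [h0] at hrr
    rw [hrr, star_zero] at hrr'
    simp only [reflL_eq _ _ hr, reflL_eq _ _ hr', ipLL_add, ipLL_rmul, hrr, hrr', zero_mul,
      add_zero]
    abel
  · rintro ⟨h6, hb⟩ v
    rw [h6] at hs
    have hA : A + star A = 2 * (-1) := by
      have : A + star A = -4 + -4 - (-4 - A - star A + -4) := by abel
      rw [this, ← hs]; norm_num
    rw [Imq_eq A _ hA] at hb
    rcases hb with hb | hb
    · have h0 : A + 2 + -(A - -1 + qi) = 1 - qi := by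
        rw [← one_add_one_eq_two]; abel
      rw [hb, h0] at hrr
      rw [hrr] at hrr'
      refine braid_aux _ _ _ _ hr hr' hrr hrr' ?_ ?_ v <;> rw [aux_two] <;>
        ext <;> norm_num [qi_re, qi_imI, qi_imJ, qi_imK, qc_re, qc_imI, qc_imJ, qc_imK]
    · have h0 : A + 2 + -(A - -1 - qi) = 1 + qi := by
        rw [← one_add_one_eq_two]; abel
      rw [hb, h0] at hrr
      rw [hrr] at hrr'
      refine braid_aux _ _ _ _ hr hr' hrr hrr' ?_ ?_ v <;> rw [aux_two] <;>
        ext <;> norm_num [qi_re, qi_imI, qi_imJ, qi_imK, qc_re, qc_imI, qc_imJ, qc_imK]
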